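/- Let K be a Cantor set in ℝ and let G be a finitely generated subgroup of diff^{1+Lip}(K) containing no free subsemigroup on two generators. Then every minimal invariant set for the action of G on K is a finite subset of K. -/

import Mathlib

open Set

/-- `K` is a Cantor set in `ℝ`: nonempty, compact, totally disconnected, perfect. -/
def IsCantorInR (K : Set ℝ) : Prop :=
  K.Nonempty ∧ IsCompact K ∧ IsTotallyDisconnected K ∧ Perfect K

open Classical in
/-- Apply a permutation of `K` to a real number (identity outside `K`). -/
noncomputable def apK (K : Set ℝ) (f : Equiv.Perm K) (y : ℝ) : ℝ :=
  if h : y ∈ K then (f ⟨y, h⟩ : ℝ) else y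

/-- `f` locally coincides with a `C¹` embedding of an open interval with
nowhere-vanishing derivative. -/
def IsD1 (K : Set ℝ) (f : Equiv.Perm K) : Prop :=
  ∀ x : K, ∃ a b : ℝ, (x : ℝ) ∈ Set.Ioo a b ∧
    ∃ F F' : ℝ → ℝ,
      (∀ y ∈ Set.Ioo a b, HasDerivAt F (F' y) y ∧ F' y ≠ 0) ∧
      ContinuousOn F' (Set.Ioo a b) ∧
      Set.InjOn F (Set.Ioo a b) ∧
      (∀ y : ℝ, y ∈ Set.Ioo a b → y ∈ K → F y = apK K f y)

/-- `f` locally coincides with a `C¹` embedding of an open interval with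
nowhere-vanishing derivative whose log-derivative is Lipschitz. -/
def IsD1Lip (K : Set ℝ) (f : Equiv.Perm K) : Prop :=
  ∀ x : K, ∃ a b : ℝ, (x : ℝ) ∈ Set.Ioo a b ∧
    ∃ F F' : ℝ → ℝ,
      (∀ y ∈ Set.Ioo a b, HasDerivAt F (F' y) y ∧ F' y ≠ 0) ∧
      ContinuousOn F' (Set.Ioo a b) ∧
      Set.InjOn F (Set.Ioo a b) ∧
      (∃ C : NNReal, LipschitzOnWith C (fun y => Real.log |F' y|) (Set.Ioo a b)) ∧
      (∀ y : ℝ, y ∈ Set.Ioo a b → y ∈ K → F y = apK K f y)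

/-- membership in `diff¹(K)`: a homeomorphism of `K` locally coinciding
with `C¹` diffeomorphisms of intervals of `ℝ`. -/
def MemDiff1 (K : Set ℝ) (f : Equiv.Perm K) : Prop :=
  Continuous (fun x : K => f x) ∧ Continuous (fun x : K => f.symm x) ∧ IsD1 K f

/-- membership in `diff^{1+Lip}(K)`. -/
def MemDiffLip (K : Set ℝ) (f : Equiv.Perm K) : Prop :=
  Continuous (fun x : K => f x) ∧ Continuous (fun x : K => f.symm x) ∧ IsD1Lip K f

/-- The derivative of `f` at `x`, as a limit of difference quotients within `K`. -/
def HasDerivOnK (K : Set ℝ) (f : Equiv.Perm K) (x d : ℝ) : Prop :=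
  Filter.Tendsto (fun y : ℝ => (apK K f y - apK K f x) / (y - x))
    (nhdsWithin x (K \ {x})) (nhds d)

/-- `f` is increasing on the interval `I`: it coincides on `I ∩ K` with an
increasing `C¹` diffeomorphism of `I` onto an interval of `ℝ`. -/
def IncreasingOnK (K : Set ℝ) (f : Equiv.Perm K) (I : Set ℝ) : Prop :=
  ∃ F F' : ℝ → ℝ,
    StrictMonoOn F I ∧
    (∀ y ∈ I, HasDerivWithinAt F (F' y) I y ∧ 0 < F' y) ∧
    ContinuousOn F' I ∧
    (∀ y ∈ I, y ∈ K → F y = apK K f y)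

/-- `A` is invariant under the subgroup `G`. -/
def IsInvariantSet (K : Set ℝ) (G : Subgroup (Equiv.Perm K)) (A : Set ℝ) : Prop :=
  ∀ g ∈ G, ∀ x ∈ A, apK K g x ∈ A

/-- `A` is a minimal invariant set for the action of `G` on `K`. -/
def IsMinimalInvariantSet (K : Set ℝ) (G : Subgroup (Equiv.Perm K)) (A : Set ℝ) : Prop :=
  A.Nonempty ∧ A ⊆ K ∧ IsClosed A ∧ IsInvariantSet K G A ∧
    ∀ B : Set ℝ, B.Nonempty → B ⊆ A → IsClosed B → IsInvariantSet K G B → B = A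

/-- The set of points of `K` fixed by every element of `H`. -/
def fixedSet (K : Set ℝ) (H : Subgroup (Equiv.Perm K)) : Set ℝ :=
  {x | x ∈ K ∧ ∀ g ∈ H, apK K g x = x}

/-- `a, b` generate a free subsemigroup: distinct nonempty positive words in
`a` and `b` define distinct elements. -/
def IsFreePair {M : Type*} [Monoid M] (a b : M) : Prop :=
  ∀ w₁ w₂ : List Bool, w₁ ≠ [] → w₂ ≠ [] →
    (w₁.map (fun t => if t then a else b)).prod = (w₂.map (fun t => if t then a else b)).prod →
    w₁ = w₂

/-- `G` contains no free subsemigroup on two generators. -/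
def HasNoFreeSubsemigroup {Γ : Type*} [Group Γ] (G : Subgroup Γ) : Prop :=
  ¬ ∃ a ∈ G, ∃ b ∈ G, IsFreePair a b

/-- `p` is accumulated on the left by `A`. -/
def AccLeft (p : ℝ) (A : Set ℝ) : Prop := ∀ α > 0, (Set.Ico (p - α) p ∩ A).Nonempty

/-- `p` is accumulated on the right by `A`. -/
def AccRight (p : ℝ) (A : Set ℝ) : Prop := ∀ α > 0, (Set.Ioc p (p + α) ∩ A).Nonempty

/-- A common radius and Lipschitz constant for all the local extensions of `g`. -/
theorem IsD1Lip.exists_uniform {K : Set ℝ} (hK : IsCompact K) {g : Equiv.Perm K}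
    (hg : IsD1Lip K g) :
    ∃ δ > 0, ∃ C ≥ 0, ∀ x : K, ∃ F F' : ℝ → ℝ,
      (∀ y ∈ Metric.ball (x : ℝ) δ, HasDerivAt F (F' y) y ∧ F' y ≠ 0) ∧
      InjOn F (Metric.ball (x : ℝ) δ) ∧
      (∀ y ∈ Metric.ball (x : ℝ) δ, ∀ z ∈ Metric.ball (x : ℝ) δ,
        Real.log |F' y| - Real.log |F' z| ≤ C * |y - z|) ∧
      ∀ y : K, (y : ℝ) ∈ Metric.ball (x : ℝ) δ → F y = g y := by
  choose a b hx F F' hder _ hinj hlip hF using hg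
  choose C hC using hlip
  obtain ⟨t, ht⟩ := hK.elim_finite_subcover (fun x : K => Ioo (a x) (b x)) (fun _ => isOpen_Ioo)
    (fun x h => mem_iUnion.2 ⟨⟨x, h⟩, hx _⟩)
  obtain ⟨δ, hδ, hball⟩ := lebesgue_number_lemma_of_metric (ι := t) hK
    (c := fun x => Ioo (a x) (b x)) (fun _ => isOpen_Ioo) (by
      intro x hxK
      obtain ⟨i, hi, hxi⟩ := mem_iUnion₂.1 (ht hxK)
      exact mem_iUnion.2 ⟨⟨i, hi⟩, hxi⟩)
  refine ⟨δ, hδ, ∑ i ∈ t, (C i : ℝ), Finset.sum_nonneg fun i _ => (C i).2, fun x => ?_⟩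
  obtain ⟨⟨i, hi⟩, hsub⟩ := hball x x.2
  refine ⟨F i, F' i, fun y hy => hder i y (hsub hy), (hinj i).mono hsub, ?_, ?_⟩
  · intro y hy z hz
    have h1 := (hC i).dist_le_mul y (hsub hy) z (hsub hz)
    rw [Real.dist_eq, Real.dist_eq] at h1
    have h2 : (C i : ℝ) ≤ ∑ i ∈ t, (C i : ℝ) :=
      Finset.single_le_sum (f := fun i => (C i : ℝ)) (fun i _ => (C i).2) hi
    calc _ ≤ _ := le_abs_self _
      _ ≤ _ := h1
      _ ≤ _ := by gcongr
  · intro y hy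
    rw [hF i y (hsub hy) y.2]
    simp [apK]

/-- Bounded distortion and monotonicity of `g` at scale `δ`. -/
def BoundedDistortion {K : Set ℝ} (g : Equiv.Perm K) (δ C : ℝ) : Prop :=
  (∀ x y z : K, dist x y < δ → dist x z < δ →
    dist (g x) (g y) * dist x z ≤
      dist (g x) (g z) * dist x y * Real.exp (C * (dist x y + dist x z))) ∧
  ∀ x y z : K, x < y → y < z → dist x z < δ →
    (g x < g y ∧ g y < g z) ∨ (g z < g y ∧ g y < g x)

theorem BoundedDistortion.mono {K : Set ℝ} {g : Equiv.Perm K} {δ δ' C C' : ℝ}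
    (h : BoundedDistortion g δ C) (hδ : δ' ≤ δ) (hC : C ≤ C') : BoundedDistortion g δ' C' := by
  refine ⟨fun x y z hy hz => ?_, fun x y z hxy hyz hxz => h.2 x y z hxy hyz (hxz.trans_le hδ)⟩
  refine (h.1 x y z (hy.trans_le hδ) (hz.trans_le hδ)).trans ?_
  gcongr

/-- The mean value theorem, in a symmetric form. -/
theorem exists_abs_deriv_eq_slope {F F' : ℝ → ℝ} {c δ : ℝ}
    (hF : ∀ y ∈ Metric.ball c δ, HasDerivAt F (F' y) y) {y : ℝ} (hy : y ∈ Metric.ball c δ)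
    (hyc : y ≠ c) :
    ∃ ξ ∈ Metric.ball c δ, |ξ - c| ≤ |y - c| ∧ |F y - F c| = |F' ξ| * |y - c| := by
  have hc : c ∈ Metric.ball c δ := Metric.mem_ball_self (dist_nonneg.trans_lt hy)
  have hconv := (convex_ball c δ).ordConnected
  have key : ∀ u ∈ Metric.ball c δ, ∀ v ∈ Metric.ball c δ, u < v →
      ∃ ξ ∈ Ioo u v, F v - F u = F' ξ * (v - u) := by
    intro u hu v hv huv
    have hsub := hconv.out hu hv
    obtain ⟨ξ, hξ, h⟩ := exists_hasDerivAt_eq_slope F F' huv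
      (fun w hw => (hF w (hsub hw)).continuousAt.continuousWithinAt)
      (fun w hw => hF w (hsub (Ioo_subset_Icc_self hw)))
    refine ⟨ξ, hξ, ?_⟩
    rw [h, div_mul_cancel₀ _ (sub_pos.2 huv).ne']
  rcases lt_or_gt_of_ne hyc with h | h
  · obtain ⟨ξ, hξ, he⟩ := key y hy c hc h
    refine ⟨ξ, hconv.out hy hc (Ioo_subset_Icc_self hξ), ?_, ?_⟩
    · rw [abs_of_neg (sub_neg.2 hξ.2), abs_of_neg (sub_neg.2 h)]; linarith [hξ.1]
    · rw [abs_sub_comm (F y), he, abs_mul, abs_sub_comm c]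
  · obtain ⟨ξ, hξ, he⟩ := key c hc y hy h
    refine ⟨ξ, hconv.out hc hy (Ioo_subset_Icc_self hξ), ?_, ?_⟩
    · rw [abs_of_pos (sub_pos.2 hξ.1), abs_of_pos (sub_pos.2 h)]; linarith [hξ.2]
    · rw [he, abs_mul]

theorem IsD1Lip.exists_boundedDistortion {K : Set ℝ} (hK : IsCompact K) {g : Equiv.Perm K}
    (hg : IsD1Lip K g) : ∃ δ > 0, ∃ C ≥ 0, BoundedDistortion g δ C := by
  obtain ⟨δ, hδ, C, hC, h⟩ := hg.exists_uniform hK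
  refine ⟨δ, hδ, C, hC, ?_, ?_⟩
  · intro x y z hy hz
    obtain ⟨F, F', hder, -, hlog, hFg⟩ := h x
    rcases eq_or_ne y x with rfl | hyx
    · simp
    rcases eq_or_ne z x with rfl | hzx
    · simp
    rw [dist_comm, Subtype.dist_eq, ← Metric.mem_ball] at hy hz
    have hx : (x : ℝ) ∈ Metric.ball (x : ℝ) δ := Metric.mem_ball_self hδ
    obtain ⟨ξ, hξ, hξle, hξe⟩ := exists_abs_deriv_eq_slope (fun y hy => (hder y hy).1) hy
      (fun h => hyx (Subtype.ext h))
    obtain ⟨ζ, hζ, hζle, hζe⟩ := exists_abs_deriv_eq_slope (fun y hy => (hder y hy).1) hz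
      (fun h => hzx (Subtype.ext h))
    rw [hFg y hy, hFg x hx] at hξe
    rw [hFg z hz, hFg x hx] at hζe
    have e : ∀ u v : K, dist u v = |(v : ℝ) - u| := fun u v => by
      rw [dist_comm, Subtype.dist_eq, Real.dist_eq]
    simp only [e]
    rw [hξe, hζe]
    have hpos1 : 0 < |F' ξ| := abs_pos.2 (hder ξ hξ).2
    have hpos2 : 0 < |F' ζ| := abs_pos.2 (hder ζ hζ).2
    have hle : |F' ξ| ≤ |F' ζ| * Real.exp (C * (|(y : ℝ) - x| + |(z : ℝ) - x|)) := by
      rw [← Real.log_le_log_iff hpos1 (by positivity), Real.log_mul hpos2.ne' (Real.exp_pos _).ne',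
        Real.log_exp]
      have h1 := hlog ξ hξ ζ hζ
      have h2 : |ξ - ζ| ≤ |(y : ℝ) - x| + |(z : ℝ) - x| := by
        have := abs_sub_le ξ x ζ
        rw [abs_sub_comm (x : ℝ) ζ] at this
        linarith
      nlinarith
    calc _ ≤ (|F' ζ| * Real.exp (C * (|(y : ℝ) - x| + |(z : ℝ) - x|))) * |(y : ℝ) - x|
          * |(z : ℝ) - x| := by gcongr
      _ = _ := by ring
  · intro x y z hxy hyz hxz
    obtain ⟨F, F', hder, hinj, -, hFg⟩ := h x
    have hx : (x : ℝ) ∈ Metric.ball (x : ℝ) δ := Metric.mem_ball_self hδ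
    have hz : (z : ℝ) ∈ Metric.ball (x : ℝ) δ := by
      rwa [dist_comm, Subtype.dist_eq, ← Metric.mem_ball] at hxz
    have hy : (y : ℝ) ∈ Metric.ball (x : ℝ) δ :=
      (convex_ball (x : ℝ) δ).ordConnected.out hx hz
        ⟨(Subtype.coe_lt_coe.2 hxy).le, (Subtype.coe_lt_coe.2 hyz).le⟩
    have hcont : ContinuousOn F (Metric.ball (x : ℝ) δ) :=
      fun w hw => (hder w hw).1.continuousAt.continuousWithinAt
    simp only [← Subtype.coe_lt_coe] at hxy hyz ⊢
    rw [← hFg x hx, ← hFg y hy, ← hFg z hz]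
    rw [Real.ball_eq_Ioo] at *
    rcases hcont.strictMonoOn_of_injOn_Ioo (by linarith) hinj with hm | hm
    · exact Or.inl ⟨hm hx hy hxy, hm hy hz hyz⟩
    · exact Or.inr ⟨hm hy hz hyz, hm hx hy hxy⟩

/-- An ordered pair of distinct points of `A` with no point of `A` strictly between them. -/
def IsGap {K : Set ℝ} (A : Set K) (p : K × K) : Prop :=
  p.1 ∈ A ∧ p.2 ∈ A ∧ p.1 ≠ p.2 ∧ ∀ w ∈ A, ¬(p.1 < w ∧ w < p.2) ∧ ¬(p.2 < w ∧ w < p.1)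

theorem IsGap.swap {K : Set ℝ} {A : Set K} {p : K × K} (h : IsGap A p) : IsGap A p.swap :=
  ⟨h.2.1, h.1, h.2.2.1.symm, fun w hw => (h.2.2.2 w hw).symm⟩

theorem IsGap.disjoint_Ioo {K : Set ℝ} {A : Set K} {p q : K × K} (hp : IsGap A p)
    (hq : IsGap A q) (hne : p ≠ q) :
    Disjoint (Ioo (p.1 : ℝ) p.2) (Ioo (q.1 : ℝ) q.2) := by
  rw [Set.disjoint_left]
  rintro x ⟨h1, h2⟩ ⟨h3, h4⟩
  refine hne (Prod.ext (le_antisymm ?_ ?_) (le_antisymm ?_ ?_)) <;> by_contra! hlt <;>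
    rw [← Subtype.coe_lt_coe] at hlt
  · exact (hq.2.2.2 _ hp.1).1 ⟨hlt, Subtype.coe_lt_coe.1 (h1.trans h4)⟩
  · exact (hp.2.2.2 _ hq.1).1 ⟨hlt, Subtype.coe_lt_coe.1 (h3.trans h2)⟩
  · exact (hp.2.2.2 _ hq.2.1).1 ⟨Subtype.coe_lt_coe.1 (h1.trans h4), hlt⟩
  · exact (hq.2.2.2 _ hp.2.1).1 ⟨Subtype.coe_lt_coe.1 (h3.trans h2), hlt⟩

/-- The total length of the gaps of a bounded set is finite. -/
theorem exists_sum_gap_le {K : Set ℝ} (hK : IsCompact K) (A : Set K) :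
    ∃ M : ℝ, ∀ T : Finset (K × K), (∀ p ∈ T, IsGap A p) → ∑ p ∈ T, dist p.1 p.2 ≤ M := by
  obtain ⟨R, hR⟩ := hK.isBounded.subset_closedBall 0
  have hbd : ∀ x : K, (x : ℝ) ∈ Icc (-|R|) |R| := fun x => by
    have := hR x.2
    rw [mem_closedBall_zero_iff, Real.norm_eq_abs] at this
    exact abs_le.1 (this.trans (le_abs_self R))
  have key : ∀ T : Finset (K × K), (∀ p ∈ T, IsGap A p) → (∀ p ∈ T, p.1 < p.2) →
      ∑ p ∈ T, dist p.1 p.2 ≤ 2 * |R| := by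
    intro T hT hlt
    have hdisj : (T : Set (K × K)).PairwiseDisjoint fun p => Ioo (p.1 : ℝ) p.2 :=
      fun p hp q hq hne => (hT p hp).disjoint_Ioo (hT q hq) hne
    have h1 := MeasureTheory.measure_biUnion_finset (μ := MeasureTheory.volume) hdisj
      (fun _ _ => measurableSet_Ioo)
    have h2 : (⋃ p ∈ T, Ioo (p.1 : ℝ) p.2) ⊆ Icc (-|R|) |R| := by
      refine iUnion₂_subset fun p _ x hx => ⟨?_, ?_⟩
      · exact (hbd p.1).1.trans hx.1.le
      · exact hx.2.le.trans (hbd p.2).2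
    have h3 := MeasureTheory.measure_mono (μ := MeasureTheory.volume) h2
    rw [h1] at h3
    simp only [Real.volume_Ioo, Real.volume_Icc] at h3
    rw [← ENNReal.ofReal_sum_of_nonneg (fun p hp => sub_nonneg.2
      (Subtype.coe_lt_coe.2 (hlt p hp)).le), ENNReal.ofReal_le_ofReal_iff
      (by linarith [abs_nonneg R])] at h3
    calc _ = ∑ p ∈ T, ((p.2 : ℝ) - p.1) := Finset.sum_congr rfl fun p hp => by
          rw [dist_comm, Subtype.dist_eq, Real.dist_eq, abs_of_pos
            (sub_pos.2 (Subtype.coe_lt_coe.2 (hlt p hp)))]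
      _ ≤ _ := by linarith
  refine ⟨2 * |R| + 2 * |R|, fun T hT => ?_⟩
  classical
  rw [← Finset.sum_filter_add_sum_filter_not T (fun p => p.1 < p.2)]
  refine add_le_add (key _ (fun p hp => hT p (Finset.mem_filter.1 hp).1)
    (fun p hp => (Finset.mem_filter.1 hp).2)) ?_
  have := key ((T.filter fun p => ¬p.1 < p.2).image Prod.swap) ?_ ?_
  · rw [Finset.sum_image (Prod.swap_injective.injOn)] at this
    simpa [dist_comm] using this
  · simp only [Finset.mem_image, Finset.mem_filter]
    rintro _ ⟨p, ⟨hp, -⟩, rfl⟩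
    exact (hT p hp).swap
  · simp only [Finset.mem_image, Finset.mem_filter]
    rintro _ ⟨p, ⟨hp, hlt⟩, rfl⟩
    exact lt_of_le_of_ne (not_lt.1 hlt) (hT p hp).2.2.1.symm

/-- Only finitely many gaps are longer than a given length. -/
theorem finite_gap_of_le {K : Set ℝ} (hK : IsCompact K) (A : Set K) {ε : ℝ} (hε : 0 < ε) :
    {p | IsGap A p ∧ ε ≤ dist p.1 p.2}.Finite := by
  obtain ⟨M, hM⟩ := exists_sum_gap_le hK A
  by_contra hinf
  obtain ⟨n, hn⟩ := exists_nat_gt (M / ε)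
  obtain ⟨T, hT, hcard⟩ := Set.Infinite.exists_subset_card_eq hinf n
  have h1 := hM T fun p hp => (hT hp).1
  have h2 := Finset.card_nsmul_le_sum T (fun p => dist p.1 p.2) ε fun p hp => (hT hp).2
  rw [hcard, nsmul_eq_mul] at h2
  rw [div_lt_iff₀ hε] at hn
  linarith

/-- A compact, totally disconnected infinite set has infinitely many gaps. -/
theorem infinite_gap {K : Set ℝ} (hK : IsCompact K) (htd : IsTotallyDisconnected K) {A : Set K}
    (hA : IsClosed A) (hinf : A.Infinite) : {p | IsGap A p}.Infinite := by
  intro hfin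
  have := isCompact_iff_compactSpace.1 hK
  have hex : ∀ x ∈ A, ∀ y ∈ A, x < y → ∃ p, IsGap A p ∧ x ≤ p.1 ∧ p.1 < y := by
    intro x hx y hy hxy
    obtain ⟨c, hxc, hcy, hcA⟩ : ∃ c : ℝ, (x : ℝ) < c ∧ c < y ∧ ∀ w ∈ A, (w : ℝ) ≠ c := by
      by_contra! hcon
      have hsub : Icc (x : ℝ) y ⊆ K := by
        intro c hc
        rcases hc.1.eq_or_lt with rfl | h1
        · exact x.2
        rcases hc.2.eq_or_lt with rfl | h2
        · exact y.2
        obtain ⟨w, -, rfl⟩ := hcon c h1 h2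
        exact w.2
      have hle : (x : ℝ) ≤ y := (Subtype.coe_lt_coe.2 hxy).le
      exact hxy.ne (Subtype.ext (htd _ hsub isPreconnected_Icc (left_mem_Icc.2 hle)
        (right_mem_Icc.2 hle)))
    obtain ⟨a, ha⟩ := ((hA.inter (isClosed_le continuous_subtype_val continuous_const)).isCompact
      : IsCompact (A ∩ {w : K | (w : ℝ) ≤ c})).exists_isGreatest ⟨x, hx, hxc.le⟩
    obtain ⟨b, hb⟩ := ((hA.inter (isClosed_le continuous_const continuous_subtype_val)).isCompact
      : IsCompact (A ∩ {w : K | c ≤ (w : ℝ)})).exists_isLeast ⟨y, hy, hcy.le⟩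
    have hac : (a : ℝ) < c := lt_of_le_of_ne ha.1.2 (hcA a ha.1.1)
    have hcb : c < (b : ℝ) := lt_of_le_of_ne hb.1.2 (hcA b hb.1.1).symm
    have hab : a < b := Subtype.coe_lt_coe.1 (hac.trans hcb)
    refine ⟨(a, b), ⟨ha.1.1, hb.1.1, hab.ne, fun w hw => ⟨?_, ?_⟩⟩, ha.2 ⟨hx, hxc.le⟩,
      Subtype.coe_lt_coe.1 (hac.trans hcy)⟩
    · rintro ⟨h1, h2⟩
      rcases le_total (w : ℝ) c with h | h
      · exact (ha.2 ⟨hw, h⟩).not_gt h1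
      · exact (hb.2 ⟨hw, h⟩).not_gt h2
    · rintro ⟨h1, h2⟩
      exact (h1.trans h2).not_gt hab
  have hfin' := (hfin.image Prod.fst).finite_subsets
  refine hinf (Set.Finite.of_injOn (f := fun x => (Prod.fst '' {p | IsGap A p}) ∩ Iio x)
    (fun x _ => inter_subset_left) ?_ hfin')
  have key : ∀ x ∈ A, ∀ y ∈ A, x < y → Prod.fst '' {p | IsGap A p} ∩ Iio x ≠
      Prod.fst '' {p | IsGap A p} ∩ Iio y := by
    intro x hx y hy hxy heq
    obtain ⟨p, hp, h1, h2⟩ := hex x hx y hy hxy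
    have hmem : p.1 ∈ Prod.fst '' {p | IsGap A p} ∩ Iio y := ⟨⟨p, hp, rfl⟩, h2⟩
    rw [← heq] at hmem
    exact h1.not_gt hmem.2
  intro x hx y hy heq
  by_contra hne
  rcases lt_or_gt_of_ne hne with h | h
  · exact key x hx y hy h heq
  · exact key y hy x hx h heq.symm

/-- A ping-pong criterion for positive words. -/
theorem isFreePair_of_disjoint_image {X : Type*} {a b : Equiv.Perm X} {U : Set X}
    (hU : U.Nonempty) (ha : MapsTo a U U) (hb : MapsTo b U U) (hab : Disjoint (a '' U) (b '' U)) :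
    IsFreePair a b := by
  let φ : Bool → Equiv.Perm X := fun t => if t then a else b
  have hmaps : ∀ t, MapsTo (φ t) U U := by rintro (_ | _) <;> simpa [φ]
  have hdisj : ∀ t x y, x ∈ U → y ∈ U → φ t x ≠ φ (!t) y := by
    rw [Set.disjoint_left] at hab
    rintro (_ | _) x y hx hy h
    · exact hab ⟨y, hy, rfl⟩ ⟨x, hx, by simpa [φ] using h⟩
    · exact hab ⟨x, hx, by simpa [φ] using h⟩ ⟨y, hy, rfl⟩
  have hword : ∀ w : List Bool, MapsTo (w.map φ).prod U U := by
    intro w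
    induction w with
    | nil => simpa using mapsTo_id U
    | cons t w ih =>
      rw [List.map_cons, List.prod_cons, Equiv.Perm.coe_mul]
      exact (hmaps t).comp ih
  have hnil : ∀ t (w : List Bool), ((t :: w).map φ).prod ≠ 1 := by
    intro t w h
    obtain ⟨x, hx⟩ := hU
    have := congrArg (fun f : Equiv.Perm X => f (φ (!t) x)) h
    simp only [List.map_cons, List.prod_cons, Equiv.Perm.coe_mul, Function.comp_apply,
      Equiv.Perm.one_apply] at this
    exact hdisj t _ x (hword w (hmaps _ hx)) hx this
  have main : ∀ w₁ w₂ : List Bool, (w₁.map φ).prod = (w₂.map φ).prod → w₁ = w₂ := by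
    intro w₁
    induction w₁ with
    | nil =>
      rintro (_ | ⟨t, w⟩) h
      · rfl
      · exact (hnil t w h.symm).elim
    | cons t w ih =>
      rintro (_ | ⟨t', w'⟩) h
      · exact (hnil t w h).elim
      · rcases eq_or_ne t t' with rfl | hne
        · rw [ih w' (by simpa using h)]
        · obtain rfl : t' = !t := by cases t <;> cases t' <;> simp_all
          obtain ⟨x, hx⟩ := hU
          have := congrArg (fun f : Equiv.Perm X => f x) h
          simp only [List.map_cons, List.prod_cons, Equiv.Perm.coe_mul,
            Function.comp_apply] at this
          exact (hdisj t _ _ (hword w hx) (hword w' hx) this).elim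
  exact fun w₁ w₂ _ _ h => main w₁ w₂ h

/-- In an infinite minimal set every point is an accumulation point. -/
theorem accPt_of_minimal {X : Type*} [TopologicalSpace X] [T1Space X] [CompactSpace X]
    {G : Subgroup (Equiv.Perm X)}
    (hcont : ∀ g ∈ G, Continuous g) {A : Set X} (hA : IsClosed A) (hinf : A.Infinite)
    (hinv : ∀ g ∈ G, MapsTo g A A)
    (hmin : ∀ B : Set X, B.Nonempty → B ⊆ A → IsClosed B → (∀ g ∈ G, MapsTo g B B) → B = A)
    {x : X} (hx : x ∈ A) : AccPt x (Filter.principal A) := by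
  suffices h : derivedSet A = A by
    rw [← h] at hx
    exact hx
  refine hmin _ ?_ (isClosed_iff_derivedSet_subset A |>.1 hA) (isClosed_derivedSet A) ?_
  · obtain ⟨x, -, h⟩ := hinf.exists_accPt_of_subset_isCompact hA.isCompact subset_rfl
    exact ⟨x, h⟩
  · intro g hg x hx
    rw [mem_derivedSet, accPt_iff_nhds] at hx ⊢
    intro U hU
    obtain ⟨y, ⟨hyU, hyA⟩, hne⟩ := hx _ ((hcont g hg).continuousAt.preimage_mem_nhds hU)
    exact ⟨g y, ⟨hyU, hinv g hg hyA⟩, g.injective.ne hne⟩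

/-- Orbits are dense in a minimal set. -/
theorem exists_mem_nhds_of_minimal {X : Type*} [TopologicalSpace X] {G : Subgroup (Equiv.Perm X)}
    (hcont : ∀ g ∈ G, Continuous g) {A : Set X} (hA : IsClosed A) (hinv : ∀ g ∈ G, MapsTo g A A)
    (hmin : ∀ B : Set X, B.Nonempty → B ⊆ A → IsClosed B → (∀ g ∈ G, MapsTo g B B) → B = A)
    {q x : X} (hq : q ∈ A) (hx : x ∈ A) {U : Set X} (hU : U ∈ nhds x) : ∃ g ∈ G, g q ∈ U := by
  have h : closure {y | ∃ g ∈ G, g q = y} = A := by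
    refine hmin _ ⟨q, subset_closure ⟨1, G.one_mem, rfl⟩⟩ (closure_minimal ?_ hA)
      isClosed_closure fun g hg => MapsTo.closure ?_ (hcont g hg)
    · rintro _ ⟨g, hg, rfl⟩
      exact hinv g hg hq
    · rintro _ ⟨g', hg', rfl⟩
      exact ⟨g * g', G.mul_mem hg hg', rfl⟩
  rw [← h, mem_closure_iff_nhds] at hx
  obtain ⟨_, hyU, g, hg, rfl⟩ := hx U hU
  exact ⟨g, hg, hyU⟩

/-- If elements of `G` contract a fixed neighbourhood of a point of an infinite minimal set to
arbitrarily small sets, then `G` contains a free pair. -/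
theorem exists_isFreePair_of_contracting {X : Type*} [MetricSpace X] [CompactSpace X]
    {G : Subgroup (Equiv.Perm X)}
    (hcont : ∀ g ∈ G, Continuous g) {A : Set X} (hA : IsClosed A) (hinf : A.Infinite)
    (hinv : ∀ g ∈ G, MapsTo g A A)
    (hmin : ∀ B : Set X, B.Nonempty → B ⊆ A → IsClosed B → (∀ g ∈ G, MapsTo g B B) → B = A)
    {U : Set X} (hU : IsOpen U) {x : X} (hxU : x ∈ U) (hx : x ∈ A)
    (hcontr : ∀ ε > 0, ∃ f ∈ G, ∃ v ∈ A, ∀ y ∈ U, dist v (f y) < ε) :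
    ∃ a ∈ G, ∃ b ∈ G, IsFreePair a b := by
  obtain ⟨x', ⟨hx'U, hx'⟩, hne⟩ :=
    accPt_iff_nhds.1 (accPt_of_minimal hcont hA hinf hinv hmin hx) U (hU.mem_nhds hxU)
  obtain ⟨V, V', hV, hV', hxV, hxV', hVV'⟩ := t2_separation hne.symm
  choose f hf v hv hfv using fun n : ℕ => hcontr (1 / ((n : ℝ) + 1)) Nat.one_div_pos_of_nat
  obtain ⟨q, hq, φ, hφ, hlim⟩ := hA.isCompact.tendsto_subseq hv
  obtain ⟨h, hh, hhq⟩ := exists_mem_nhds_of_minimal hcont hA hinv hmin hq hx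
    ((hU.inter hV).mem_nhds ⟨hxU, hxV⟩)
  obtain ⟨h', hh', hhq'⟩ := exists_mem_nhds_of_minimal hcont hA hinv hmin hq hx'
    ((hU.inter hV').mem_nhds ⟨hx'U, hxV'⟩)
  obtain ⟨η, hη, hball⟩ := Metric.mem_nhds_iff.1 (Filter.inter_mem
    ((hcont h hh).continuousAt.preimage_mem_nhds ((hU.inter hV).mem_nhds hhq))
    ((hcont h' hh').continuousAt.preimage_mem_nhds ((hU.inter hV').mem_nhds hhq')))
  obtain ⟨n, hn, hn'⟩ := ((Metric.tendsto_nhds.1 hlim (η / 2) (half_pos hη)).and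
    ((tendsto_one_div_add_atTop_nhds_zero_nat.comp hφ.tendsto_atTop).eventually_lt_const
      (half_pos hη))).exists
  have key : ∀ y ∈ U, h (f (φ n) y) ∈ U ∩ V ∧ h' (f (φ n) y) ∈ U ∩ V' := by
    intro y hy
    refine hball (Metric.mem_ball.2 ?_)
    have h1 := hfv (φ n) y hy
    have h2 := dist_triangle_left (f (φ n) y) q (v (φ n))
    simp only [Function.comp_apply] at hn hn'
    linarith
  refine ⟨h * f (φ n), G.mul_mem hh (hf _), h' * f (φ n), G.mul_mem hh' (hf _),
    isFreePair_of_disjoint_image ⟨x, hxU⟩ (fun y hy => (key y hy).1.1)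
      (fun y hy => (key y hy).2.1) (hVV'.mono ?_ ?_)⟩
  · rintro _ ⟨y, hy, rfl⟩
    exact (key y hy).1.2
  · rintro _ ⟨y, hy, rfl⟩
    exact (key y hy).2.2

/-- Two gaps shorter than `δ` are adjacent when an element of `S` maps one to the other. -/
def gapGraph {K : Set ℝ} (A : Set K) (S : Set (Equiv.Perm K)) (δ : ℝ) : SimpleGraph (K × K) :=
  SimpleGraph.fromRel fun u v => (IsGap A u ∧ dist u.1 u.2 < δ) ∧ (IsGap A v ∧ dist v.1 v.2 < δ) ∧
    ∃ s ∈ S, v = (s u.1, s u.2)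

theorem gapGraph_adj {K : Set ℝ} {A : Set K} {S : Set (Equiv.Perm K)}
    (hS : ∀ s ∈ S, s⁻¹ ∈ S) {δ : ℝ} {u v : K × K} (h : (gapGraph A S δ).Adj u v) :
    (IsGap A u ∧ dist u.1 u.2 < δ) ∧ (IsGap A v ∧ dist v.1 v.2 < δ) ∧
      ∃ s ∈ S, v = (s u.1, s u.2) := by
  rw [gapGraph, SimpleGraph.fromRel_adj] at h
  rcases h.2 with h | ⟨hv, hu, s, hs, rfl⟩
  · exact h
  · exact ⟨hu, hv, s⁻¹, hS s hs, by simp⟩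

theorem isGap_of_reachable {K : Set ℝ} {A : Set K} {S : Set (Equiv.Perm K)}
    (hS : ∀ s ∈ S, s⁻¹ ∈ S) {δ : ℝ} {u v : K × K} (hu : IsGap A u ∧ dist u.1 u.2 < δ)
    (h : (gapGraph A S δ).Reachable u v) : IsGap A v ∧ dist v.1 v.2 < δ := by
  obtain ⟨p⟩ := h
  induction p with
  | nil => exact hu
  | cons h _ ih => exact ih (gapGraph_adj hS h).2.1

/-- The distortion of the composition along a walk of gaps is controlled by the total length of
these gaps. -/
theorem exists_distortion_of_walk {K : Set ℝ} {A : Set K} {G : Subgroup (Equiv.Perm K)}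
    {S : Set (Equiv.Perm K)} (hSG : S ⊆ G) (hS : ∀ s ∈ S, s⁻¹ ∈ S) {δ C : ℝ} (hC : 0 ≤ C)
    (hdist : ∀ s ∈ S, BoundedDistortion s δ C) {u v : K × K} (p : (gapGraph A S δ).Walk u v) :
    ∃ f ∈ G, ∀ y : K,
      dist u.1 y * Real.exp (2 * C * (p.support.map fun w => dist w.1 w.2).sum) ≤ dist u.1 u.2 →
      dist v.1 (f y) * dist u.1 u.2 ≤ dist v.1 v.2 * (dist u.1 y *
        Real.exp (2 * C * (p.support.map fun w => dist w.1 w.2).sum)) := by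
  induction p with
  | @nil u =>
    refine ⟨1, G.one_mem, fun y _ => ?_⟩
    have : 1 ≤ Real.exp (2 * C * ([u].map fun w => dist w.1 w.2).sum) :=
      Real.one_le_exp (by simp; positivity)
    rw [mul_comm]
    gcongr
    exact le_mul_of_one_le_right dist_nonneg this
  | @cons u w v h p ih =>
    obtain ⟨f, hf, hfy⟩ := ih
    obtain ⟨⟨hu, huδ⟩, ⟨hw, -⟩, s, hs, rfl⟩ := gapGraph_adj hS h
    refine ⟨f * s, G.mul_mem hf (hSG hs), fun y hy => ?_⟩
    specialize hfy (s y)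
    rw [SimpleGraph.Walk.support_cons, List.map_cons, List.sum_cons] at hy ⊢
    set σ := (p.support.map fun w => dist w.1 w.2).sum with hσ
    have hσ0 : 0 ≤ σ := List.sum_nonneg (by
      simp only [List.mem_map]
      rintro _ ⟨_, _, rfl⟩
      exact dist_nonneg)
    have hℓ : 0 < dist u.1 u.2 := dist_pos.2 hu.2.2.1
    have hℓ' : 0 < dist (s u.1) (s u.2) := dist_pos.2 hw.2.2.1
    have hdℓ : dist u.1 y ≤ dist u.1 u.2 :=
      (le_mul_of_one_le_right dist_nonneg (Real.one_le_exp (by positivity))).trans hy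
    have h1 := (hdist s hs).1 u.1 y u.2 (hdℓ.trans_lt huδ) huδ
    have h2 : dist (s u.1) (s y) * dist u.1 u.2 ≤
        dist (s u.1) (s u.2) * dist u.1 y * Real.exp (2 * C * dist u.1 u.2) := by
      refine h1.trans ?_
      gcongr _ * Real.exp ?_
      nlinarith
    have h3 : dist (s u.1) (s y) * Real.exp (2 * C * σ) * dist u.1 u.2 ≤
        dist (s u.1) (s u.2) * (dist u.1 y * Real.exp (2 * C * (dist u.1 u.2 + σ))) := by
      rw [mul_add, Real.exp_add]
      calc _ = dist (s u.1) (s y) * dist u.1 u.2 * Real.exp (2 * C * σ) := by ring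
        _ ≤ dist (s u.1) (s u.2) * dist u.1 y * Real.exp (2 * C * dist u.1 u.2) *
            Real.exp (2 * C * σ) := by gcongr
        _ = _ := by ring
    have h4 := hfy (le_of_mul_le_mul_right (h3.trans (by gcongr)) hℓ)
    simp only [Equiv.Perm.coe_mul, Function.comp_apply]
    refine le_of_mul_le_mul_right ?_ hℓ'
    calc _ = dist v.1 (f (s y)) * dist (s u.1) (s u.2) * dist u.1 u.2 := by ring
      _ ≤ dist v.1 v.2 * (dist (s u.1) (s y) * Real.exp (2 * C * σ)) * dist u.1 u.2 := by gcongr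
      _ = dist v.1 v.2 * (dist (s u.1) (s y) * Real.exp (2 * C * σ) * dist u.1 u.2) := by ring
      _ ≤ dist v.1 v.2 * (dist (s u.1) (s u.2) *
          (dist u.1 y * Real.exp (2 * C * (dist u.1 u.2 + σ)))) := by gcongr
      _ = _ := by ring

/-- An infinite connected component of short gaps yields arbitrarily strong contractions of a
fixed neighbourhood of an endpoint of a gap. -/
theorem exists_contracting_of_infinite_reachable {K : Set ℝ} (hK : IsCompact K) {A : Set K}
    {G : Subgroup (Equiv.Perm K)} {S : Set (Equiv.Perm K)} (hSG : S ⊆ G) (hS : ∀ s ∈ S, s⁻¹ ∈ S)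
    {δ C : ℝ} (hC : 0 ≤ C) (hdist : ∀ s ∈ S, BoundedDistortion s δ C) {u : K × K}
    (hu : IsGap A u ∧ dist u.1 u.2 < δ) (hinf : {v | (gapGraph A S δ).Reachable u v}.Infinite) :
    ∃ r > 0, ∀ ε > 0, ∃ f ∈ G, ∃ v ∈ A, ∀ y ∈ Metric.ball u.1 r, dist v (f y) < ε := by
  obtain ⟨M, hM⟩ := exists_sum_gap_le hK A
  have hℓ : 0 < dist u.1 u.2 := dist_pos.2 hu.1.2.2.1
  refine ⟨dist u.1 u.2 / Real.exp (2 * C * M), by positivity, fun ε hε => ?_⟩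
  obtain ⟨v, hv, hvε⟩ := (hinf.sdiff (finite_gap_of_le hK A hε)).nonempty
  have hvgap := (isGap_of_reachable hS hu hv).1
  have hvε : dist v.1 v.2 < ε := by
    by_contra! h
    exact hvε ⟨hvgap, h⟩
  obtain ⟨p, hp⟩ := SimpleGraph.Reachable.exists_isPath hv
  obtain ⟨f, hf, hfy⟩ := exists_distortion_of_walk hSG hS hC hdist p
  refine ⟨f, hf, v.1, hvgap.1, fun y hy => ?_⟩
  classical
  have hσ : (p.support.map fun w => dist w.1 w.2).sum ≤ M := by
    rw [← List.sum_toFinset _ hp.support_nodup]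
    refine hM _ fun w hw => ?_
    exact (isGap_of_reachable hS hu ⟨p.takeUntil w (List.mem_toFinset.1 hw)⟩).1
  rw [Metric.mem_ball, dist_comm, lt_div_iff₀ (Real.exp_pos _)] at hy
  have h1 : dist u.1 y * Real.exp (2 * C * (p.support.map fun w => dist w.1 w.2).sum) ≤
      dist u.1 u.2 := by
    refine le_trans ?_ hy.le
    gcongr
  have h2 := (hfy y h1).trans (mul_le_mul_of_nonneg_left h1 dist_nonneg)
  exact (le_of_mul_le_mul_right h2 hℓ).trans_lt hvε

/-- Short gaps are mapped to gaps. -/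
theorem IsGap.map {K : Set ℝ} {A : Set K} {s : Equiv.Perm K} {δ C : ℝ}
    (hs : BoundedDistortion s⁻¹ δ C) (hmaps : MapsTo s A A)
    (hmaps' : MapsTo (s⁻¹ : Equiv.Perm K) A A)
    {p : K × K} (hp : IsGap A p) (hδ : dist (s p.1) (s p.2) < δ) :
    IsGap A (s p.1, s p.2) := by
  refine ⟨hmaps hp.1, hmaps hp.2.1, s.injective.ne hp.2.2.1, fun w hw => ?_⟩
  have hgap := hp.2.2.2 _ (hmaps' hw)
  constructor
  · rintro ⟨h1, h2⟩
    have := hs.2 _ _ _ h1 h2 hδ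
    simp only [Equiv.Perm.inv_def, Equiv.symm_apply_apply] at this hgap
    tauto
  · rintro ⟨h1, h2⟩
    have := hs.2 _ _ _ h1 h2 (by rwa [dist_comm])
    simp only [Equiv.Perm.inv_def, Equiv.symm_apply_apply] at this hgap
    tauto

/-- Some connected component of short gaps is infinite. -/
theorem exists_infinite_reachable {K : Set ℝ} (hK : IsCompact K) (htd : IsTotallyDisconnected K)
    {G : Subgroup (Equiv.Perm K)} {S : Set (Equiv.Perm K)} (hSfin : S.Finite)
    (hSG : Subgroup.closure S = G) (hS : ∀ s ∈ S, s⁻¹ ∈ S) {A : Set K} (hA : IsClosed A)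
    (hinf : A.Infinite)
    (hmin : ∀ B : Set K, B.Nonempty → B ⊆ A → IsClosed B → (∀ g ∈ G, MapsTo g B B) → B = A)
    {δ : ℝ} (hδ : 0 < δ)
    (hgap : ∀ s ∈ S, ∀ u, IsGap A u → dist u.1 u.2 < δ → IsGap A (s u.1, s u.2)) :
    ∃ u, (IsGap A u ∧ dist u.1 u.2 < δ) ∧ {v | (gapGraph A S δ).Reachable u v}.Infinite := by
  by_contra! hfin
  have hexit : ∀ u, (IsGap A u ∧ dist u.1 u.2 < δ) → ∃ v, (gapGraph A S δ).Reachable u v ∧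
      ∃ s ∈ S, δ ≤ dist (s v.1) (s v.2) := by
    intro u hu
    by_contra! hsmall
    have hclosed : ∀ s ∈ S, ∀ v, (gapGraph A S δ).Reachable u v →
        (gapGraph A S δ).Reachable u (s v.1, s v.2) := by
      intro s hs v hv
      have hvgap := isGap_of_reachable hS hu hv
      rcases eq_or_ne v (s v.1, s v.2) with h | h
      · rwa [← h]
      · refine hv.trans (SimpleGraph.Adj.reachable ?_)
        rw [gapGraph, SimpleGraph.fromRel_adj]
        exact ⟨h, Or.inl ⟨hvgap, ⟨hgap s hs v hvgap.1 hvgap.2, hsmall v hv s hs⟩, s, hs, rfl⟩⟩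
    set B : Set K := Prod.fst '' {v | (gapGraph A S δ).Reachable u v}
    have hBfin : B.Finite := (hfin u hu).image _
    have hBS : ∀ s ∈ S, MapsTo s B B := by
      rintro s hs _ ⟨v, hv, rfl⟩
      exact ⟨_, hclosed s hs v hv, rfl⟩
    have hBA : B = A := by
      refine hmin B ⟨u.1, u, SimpleGraph.Reachable.refl u, rfl⟩ ?_ hBfin.isClosed ?_
      · rintro _ ⟨v, hv, rfl⟩
        exact (isGap_of_reachable hS hu hv).1.1
      · intro g hg
        rw [← hSG] at hg
        induction hg using Subgroup.closure_induction with
        | mem s hs => exact hBS s hs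
        | one => exact mapsTo_id B
        | mul g g' _ _ h h' => exact h.comp h'
        | inv g _ h =>
          have himg : g '' B = B :=
            (hBfin.image g).eq_of_subset_of_encard_le h.image_subset (g.injective.encard_image B).ge
          intro x hx
          rw [← himg] at hx
          obtain ⟨y, hy, rfl⟩ := hx
          simpa using hy
    exact hinf (hBA ▸ hBfin)
  have hbig := finite_gap_of_le hK A hδ
  set Q : Set (K × K) := ⋃ s ∈ S, (fun v : K × K => (s v.1, s v.2)) ''
    {p | IsGap A p ∧ δ ≤ dist p.1 p.2}
  have hQ : Q.Finite := hSfin.biUnion fun s _ => hbig.image _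
  have hunion : (⋃ v ∈ {v ∈ Q | IsGap A v ∧ dist v.1 v.2 < δ},
      {w | (gapGraph A S δ).Reachable v w}).Finite :=
    (hQ.subset (sep_subset _ _)).biUnion fun v hv => hfin v hv.2
  refine infinite_gap hK htd hA hinf ((hbig.union hunion).subset fun u hu => ?_)
  rcases le_or_gt δ (dist u.1 u.2) with h | h
  · exact Or.inl ⟨hu, h⟩
  · obtain ⟨v, hv, s, hs, hsv⟩ := hexit u ⟨hu, h⟩
    have hvgap := isGap_of_reachable hS ⟨hu, h⟩ hv
    refine Or.inr (mem_iUnion₂.2 ⟨v, ⟨mem_iUnion₂.2 ⟨s⁻¹, hS s hs, (s v.1, s v.2),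
      ⟨hgap s hs v hvgap.1 hvgap.2, hsv⟩, by simp⟩, hvgap⟩, hv.symm⟩)

/-- The elements of a finite set of `C^{1+Lip}` maps satisfy the distortion bound with common
constants. -/
theorem exists_boundedDistortion_of_finite {K : Set ℝ} (hK : IsCompact K)
    {S : Set (Equiv.Perm K)} (hSfin : S.Finite) (hS : ∀ s ∈ S, IsD1Lip K s) :
    ∃ δ > 0, ∃ C ≥ 0, ∀ s ∈ S, BoundedDistortion s δ C := by
  have h : ∀ᶠ n : ℕ in Filter.atTop, ∀ s ∈ S, BoundedDistortion s (1 / ((n : ℝ) + 1)) n := by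
    rw [Filter.eventually_all_finite hSfin]
    intro s hs
    obtain ⟨δ, hδ, C, -, h⟩ := (hS s hs).exists_boundedDistortion hK
    filter_upwards [tendsto_one_div_add_atTop_nhds_zero_nat.eventually_lt_const hδ,
      tendsto_natCast_atTop_atTop.eventually_ge_atTop C] with n hn hn'
    exact h.mono hn.le hn'
  obtain ⟨n, hn⟩ := h.exists
  exact ⟨_, Nat.one_div_pos_of_nat, n, n.cast_nonneg, hn⟩

theorem finite_of_minimal {K : Set ℝ} (hK : IsCompact K) (htd : IsTotallyDisconnected K)
    {G : Subgroup (Equiv.Perm K)} (hdiff : ∀ g ∈ G, MemDiffLip K g) (hFG : G.FG)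
    (hfree : HasNoFreeSubsemigroup G) {A : Set K} (hA : IsClosed A)
    (hinv : ∀ g ∈ G, MapsTo g A A)
    (hmin : ∀ B : Set K, B.Nonempty → B ⊆ A → IsClosed B → (∀ g ∈ G, MapsTo g B B) → B = A) :
    A.Finite := by
  by_contra hinf
  have := isCompact_iff_compactSpace.1 hK
  have hcont : ∀ g ∈ G, Continuous g := fun g hg => (hdiff g hg).1
  obtain ⟨T, hT⟩ := hFG
  set S : Set (Equiv.Perm K) := T ∪ (T : Set (Equiv.Perm K))⁻¹
  have hSfin : S.Finite := T.finite_toSet.union T.finite_toSet.inv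
  have hS : ∀ s ∈ S, s⁻¹ ∈ S := by
    rintro s (hs | hs)
    · exact Or.inr (by simpa using hs)
    · exact Or.inl hs
  have hSG : Subgroup.closure S = G := by
    rw [Subgroup.closure_union, Subgroup.closure_inv, sup_idem, hT]
  have hSG' : S ⊆ G := hSG ▸ Subgroup.subset_closure
  obtain ⟨δ, hδ, C, hC, hdist⟩ := exists_boundedDistortion_of_finite hK hSfin
    fun s hs => (hdiff s (hSG' hs)).2.2
  obtain ⟨δ', ⟨hδ', hδ'δ⟩, hunif⟩ : ∃ δ' ∈ Ioo 0 δ, ∀ s ∈ S, ∀ x y, dist x y < δ' →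
      dist (s x) (s y) < δ := by
    have h : ∀ᶠ r in nhdsWithin (0 : ℝ) (Ioi 0), ∀ s ∈ S, ∀ x y, dist x y < r →
        dist (s x) (s y) < δ := by
      rw [Filter.eventually_all_finite hSfin]
      intro s hs
      obtain ⟨η, hη, h⟩ := Metric.uniformContinuous_iff.1
        (CompactSpace.uniformContinuous_of_continuous (hcont s (hSG' hs))) δ hδ
      filter_upwards [Ioo_mem_nhdsGT hη] with r hr x y hxy
      exact h (hxy.trans hr.2)
    exact ((Filter.Eventually.and (Ioo_mem_nhdsGT hδ) h)).exists
  obtain ⟨u, hu, hreach⟩ := exists_infinite_reachable hK htd hSfin hSG hS hA hinf hmin hδ'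
    fun s hs u hu hlt => hu.map (hdist _ (hS s hs)) (hinv s (hSG' hs))
      (hinv _ (hSG' (hS s hs))) (hunif s hs _ _ hlt)
  obtain ⟨r, hr, hcontr⟩ := exists_contracting_of_infinite_reachable hK hSG' hS hC
    (fun s hs => (hdist s hs).mono hδ'δ.le le_rfl) hu hreach
  exact hfree (exists_isFreePair_of_contracting hcont hA hinf hinv hmin Metric.isOpen_ball
    (Metric.mem_ball_self hr) hu.1.1 hcontr)

/-- If `G` is finitely generated with no free subsemigroup on two
generators, every minimal invariant set of the action of `G` on `K` is finite. -/
theorem minimal_invariant_finite (K : Set ℝ) (hK : IsCantorInR K)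
    (G : Subgroup (Equiv.Perm K))
    (hdiff : ∀ g ∈ G, MemDiffLip K g)
    (hFG : G.FG)
    (hfree : HasNoFreeSubsemigroup G) :
    ∀ A : Set ℝ, IsMinimalInvariantSet K G A → A.Finite := by
  rintro A ⟨-, hAK, hA, hinv, hmin⟩
  have hap : ∀ (g : Equiv.Perm K) (x : K), apK K g x = g x := fun g x => by simp [apK]
  have hcoe : ((↑) : K → ℝ) '' ((↑) ⁻¹' A) = A := by
    rw [Subtype.image_preimage_coe, inter_eq_right.2 hAK]
  rw [← hcoe]
  refine (finite_of_minimal hK.2.1 hK.2.2.1 hdiff hFG hfree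
    (hA.preimage continuous_subtype_val) ?_ ?_).image _
  · intro g hg x hx
    rw [mem_preimage, ← hap]
    exact hinv g hg x hx
  · intro B hB hBA hBc hBinv
    rw [← hmin ((↑) '' B) (hB.image _) (image_subset_iff.2 hBA)
      (hK.2.1.isClosed.isClosedEmbedding_subtypeVal.isClosedMap B hBc) ?_,
      preimage_image_eq _ Subtype.val_injective]
    rintro g hg _ ⟨x, hx, rfl⟩
    rw [hap]
    exact mem_image_of_mem _ (hBinv g hg hx)
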